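/- Let A = Σ_{n=1}^∞ Aₙ and B = Σ_{n=1}^∞ Bₙ be strictly convergent sums in the multiplier algebra M(A) of a C*-algebra A, where Aₙ, Bₙ are positive, Aₙ Aₘ = 0 and Bₙ Bₘ = 0 for n ≠ m. If there exists δ > 0 such that Aₙ ≼ (Bₙ − δ)₊ (Cuntz subequivalence in M(A)) for all n, then A ≼ (B − δ')₊ for every 0 < δ' < δ. -/

import Mathlib

open Filter Topology
open scoped MultiplierAlgebra

def CuntzBelow {M : Type*} [CStarAlgebra M] (a b : M) : Prop :=
  ∃ x : ℕ → M, Tendsto (fun n => ‖a - x n * b * star (x n)‖) atTop (𝓝 0)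

noncomputable def cutoff {M : Type*} [CStarAlgebra M] (a : M) (δ : ℝ) : M :=
  cfc (fun t : ℝ => max (t - δ) 0) a

/-- A sequence in the multiplier algebra converges strictly to `L`. -/
def StrictTendsto {A : Type*} [NonUnitalCStarAlgebra A]
    (T : ℕ → 𝓜(ℂ, A)) (L : 𝓜(ℂ, A)) : Prop :=
  ∀ a : A,
    Tendsto (fun n => ‖(T n - L) * (a : 𝓜(ℂ, A))‖) atTop (𝓝 0) ∧
    Tendsto (fun n => ‖(a : 𝓜(ℂ, A)) * (T n - L)‖) atTop (𝓝 0)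

section CStar

variable {M : Type*} [CStarAlgebra M]

theorem mul_cfc_eq_mul_cfc_of_mul_eq {b s : M} (hb : IsSelfAdjoint b) (hs : IsSelfAdjoint s)
    (h₁ : b * s = b * b) (h₂ : s * b = b * b) {f : ℝ → ℝ} (hf : Continuous f) :
    b * cfc f s = b * cfc f b := by
  let K : StarSubalgebra ℂ (M × M) :=
    { carrier := {z | b * z.1 = z.2 * b ∧ z.1 * b = b * z.2}
      mul_mem' := by
        rintro ⟨u, v⟩ ⟨u', v'⟩ ⟨h1, h2⟩ ⟨h3, h4⟩
        refine ⟨?_, ?_⟩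
        · simp only [Prod.mk_mul_mk] at *
          rw [← mul_assoc, h1, mul_assoc, h3, mul_assoc]
        · simp only [Prod.mk_mul_mk] at *
          rw [mul_assoc, h4, ← mul_assoc, h2, mul_assoc]
      add_mem' := by
        rintro ⟨u, v⟩ ⟨u', v'⟩ ⟨h1, h2⟩ ⟨h3, h4⟩
        exact ⟨by simp_all [mul_add, add_mul], by simp_all [mul_add, add_mul]⟩
      algebraMap_mem' := by
        intro r
        exact ⟨(Algebra.commutes r b).symm, Algebra.commutes r b⟩
      star_mem' := by
        rintro ⟨u, v⟩ ⟨h1, h2⟩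
        refine ⟨?_, ?_⟩
        · simpa [hb.star_eq] using congrArg star h2
        · simpa [hb.star_eq] using congrArg star h1 }
  have hK : IsClosed (K : Set (M × M)) := by
    apply IsClosed.inter
    · exact isClosed_eq (by fun_prop) (by fun_prop)
    · exact isClosed_eq (by fun_prop) (by fun_prop)
  have hmem : ((s, b) : M × M) ∈ K := ⟨h₁, h₂⟩
  have hself : IsSelfAdjoint ((s, b) : M × M) := by
    simp [IsSelfAdjoint, Prod.star_def, hb.star_eq, hs.star_eq]
  let F : ℂ → ℂ := fun z => (f z.re : ℂ)
  have hF : Continuous F := by fun_prop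
  have key : cfc F ((s, b) : M × M) ∈ K := cfc_mem (𝕜' := ℂ) (s := K) F hmem
  rw [cfc_map_prod (S := ℂ) F s b hF.continuousOn hself.isStarNormal hs.isStarNormal
    hb.isStarNormal] at key
  have h := key.1
  simp only [F] at h
  rw [← cfc_real_eq_complex f hs, ← cfc_real_eq_complex f hb] at h
  rw [h]
  exact ((Commute.refl b).cfc_real f).eq

theorem norm_sq_le_of_norm_mul_self_le {C : ℝ} {p : M} (hp : IsSelfAdjoint p)
    (h : ‖p * p‖ ≤ C) : ‖p‖ ^ 2 ≤ C := by
  rwa [hp.norm_mul_self] at h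

variable [PartialOrder M] [StarOrderedRing M]

theorem norm_sum_le_of_mul_self_le_smul {ε : ℝ} (hε : 0 ≤ ε) {e : ℕ → M}
    (he : ∀ n, IsSelfAdjoint (e n)) (hee : ∀ n, e n * e n ≤ ε • e n)
    (horth : ∀ n m, n ≠ m → e n * e m = 0) (s : Finset ℕ) : ‖∑ n ∈ s, e n‖ ≤ ε := by
  set E := ∑ n ∈ s, e n with hE
  have hEs : IsSelfAdjoint E := isSelfAdjoint_sum s fun n _ => he n
  have hEE : E * E = ∑ n ∈ s, e n * e n := by
    rw [hE, Finset.sum_mul_sum]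
    refine Finset.sum_congr rfl fun n hn => ?_
    exact Finset.sum_eq_single_of_mem n hn fun m _ hm => horth n m hm.symm
  have hle : E * E ≤ ε • E := by
    rw [hEE, hE, Finset.smul_sum]
    exact Finset.sum_le_sum fun n _ => hee n
  have h0 : 0 ≤ E * E := hEs.mul_self_nonneg
  have := CStarAlgebra.norm_le_norm_of_nonneg_of_le h0 hle
  rw [hEs.norm_mul_self, norm_smul, Real.norm_of_nonneg hε] at this
  by_contra! hlt
  nlinarith [norm_nonneg E]

theorem star_mul_mul_le_of_norm_sq_le {C : ℝ} (v p : M) (hC : ‖v‖ ^ 2 ≤ C) :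
    star p * (star v * v) * p ≤ C • (star p * p) := by
  have h : star v * v ≤ algebraMap ℝ M C :=
    CStarAlgebra.star_mul_le_algebraMap_norm_sq.trans
      (algebraMap_mono M hC)
  have := star_left_conjugate_le_conjugate h p
  rwa [Algebra.algebraMap_eq_smul_one, mul_smul_comm, smul_mul_assoc, mul_one] at this

theorem exists_intertwiner {ε δ δ' K η : ℝ} (hε : 0 < ε) (hδ'₀ : 0 < δ') (hδ' : δ' < δ)
    {a b x : M} (ha : 0 ≤ a) (hb : 0 ≤ b) (hK : ‖a‖ + η ≤ K)
    (hx : ‖a - x * cutoff b δ * star x‖ ≤ η) :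
    ∃ w e u v : M, w = a * u * b ∧
      star w * w ≤ (K / (δ * (δ - δ'))) • b ∧ w * star w ≤ (K / ((δ - δ') * ε)) • a ∧
      e = v * a ∧ e = a * v ∧ IsSelfAdjoint e ∧ e * e ≤ ε • e ∧
      ‖a - w * cutoff b δ' * star w - e‖ ≤ η := by
  have hδ : 0 < δ := hδ'₀.trans hδ'
  have hd : 0 < δ - δ' := sub_pos.2 hδ'
  have hη : 0 ≤ η := (norm_nonneg _).trans hx
  have hK0 : 0 ≤ K := (add_nonneg (norm_nonneg _) hη).trans hK
  have has : IsSelfAdjoint a := .of_nonneg ha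
  have hbs : IsSelfAdjoint b := .of_nonneg hb
  have hmε : ∀ t : ℝ, 0 < max ε t := fun t => lt_max_of_lt_left hε
  have hmδ : ∀ t : ℝ, 0 < max δ t := fun t => lt_max_of_lt_left hδ
  have hmd : ∀ t : ℝ, 0 < max δ t - δ' := fun t => by linarith [le_max_left δ t]
  let q : ℝ → ℝ := fun t => (max ε t)⁻¹
  let r : ℝ → ℝ := fun t => (max δ t)⁻¹ * (√(max δ t - δ'))⁻¹
  let g : ℝ → ℝ := fun t => t * q t
  let p : ℝ → ℝ := fun t => r t * t
  let s : ℝ → ℝ := fun t => √(max (t - δ) 0)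
  let c : ℝ → ℝ := fun t => max (t - δ') 0
  have hq : Continuous q := (continuous_const.max continuous_id).inv₀ fun t => (hmε t).ne'
  have hr : Continuous r :=
    ((continuous_const.max continuous_id).inv₀ fun t => (hmδ t).ne').mul
      (((continuous_const.max continuous_id).sub continuous_const).sqrt.inv₀
        fun t => (Real.sqrt_pos.2 (hmd t)).ne')
  have hg : Continuous g := continuous_id.mul hq
  have hp : Continuous p := hr.mul continuous_id
  have hs : Continuous s := by fun_prop
  have hc : Continuous c := by fun_prop
  have hg_le : ∀ t, 0 ≤ t → 0 ≤ g t ∧ g t ≤ 1 ∧ g t * g t ≤ ε⁻¹ * t ∧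
      (t - g t * t * g t) * (t - g t * t * g t) ≤ ε * (t - g t * t * g t) := fun t ht => by
    have h1 : g t = t / max ε t := rfl
    have h0 : 0 ≤ g t := by rw [h1]; exact div_nonneg ht (hmε t).le
    have h2 : g t ≤ 1 := by rw [h1]; exact div_le_one_of_le₀ (le_max_right _ _) (hmε t).le
    have h3 : g t ≤ ε⁻¹ * t := by
      rw [h1, div_eq_inv_mul]
      gcongr
      exact le_max_left _ _
    refine ⟨h0, h2, by nlinarith, ?_⟩
    have h4 : 0 ≤ t - g t * t * g t := by nlinarith [mul_nonneg h0 ht]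
    refine mul_le_mul_of_nonneg_right ?_ h4
    rcases le_total t ε with h | h
    · nlinarith [mul_nonneg h0 (mul_nonneg h0 ht)]
    · have : g t = 1 := by
        rw [h1, max_eq_right h, div_self (hε.trans_le h).ne']
      rw [this]; linarith
  have hpp : ∀ t, p t * p t = (t / max δ t) ^ 2 / (max δ t - δ') := fun t => by
    have h : (√(max δ t - δ'))⁻¹ * (√(max δ t - δ'))⁻¹ = (max δ t - δ')⁻¹ := by
      rw [← mul_inv, Real.mul_self_sqrt (hmd t).le]
    rw [div_eq_mul_inv _ (max δ t - δ'), ← h]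
    simp only [p, r]
    ring
  have hp_le : ∀ t, 0 ≤ t → p t * p t ≤ (δ - δ')⁻¹ ∧ p t * p t ≤ (δ * (δ - δ'))⁻¹ * t := by
    intro t ht
    have h0 : 0 ≤ t / max δ t := div_nonneg ht (hmδ t).le
    have h1 : t / max δ t ≤ 1 := div_le_one_of_le₀ (le_max_right _ _) (hmδ t).le
    have h2 : t / max δ t ≤ δ⁻¹ * t := by
      rw [div_eq_inv_mul]; gcongr; exact le_max_left _ _
    have h3 : (max δ t - δ')⁻¹ ≤ (δ - δ')⁻¹ := by
      gcongr; exact le_max_left _ _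
    have h4 : 0 ≤ (max δ t - δ')⁻¹ := (inv_pos.2 (hmd t)).le
    rw [hpp, div_eq_mul_inv]
    constructor
    · calc _ ≤ 1 * (δ - δ')⁻¹ := mul_le_mul (by nlinarith) h3 h4 zero_le_one
        _ = _ := one_mul _
    · calc _ ≤ (δ⁻¹ * t) * (δ - δ')⁻¹ :=
            mul_le_mul (by nlinarith) h3 h4 (mul_nonneg (inv_pos.2 hδ).le ht)
        _ = _ := by rw [mul_inv]; ring
  have hspc : ∀ t, s t * (p t * (c t * (p t * s t))) = max (t - δ) 0 := fun t => by
    have h1 : s t * (p t * (c t * (p t * s t))) = (s t * s t) * (p t * p t) * c t := by ring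
    have h2 : s t * s t = max (t - δ) 0 := Real.mul_self_sqrt (le_max_right _ _)
    rw [h1, h2, hpp]
    rcases le_total t δ with h | h
    · rw [max_eq_right (by linarith : t - δ ≤ 0)]; ring
    · have h3 : t - δ' ≠ 0 := by linarith
      have h4 : t ≠ 0 := by linarith
      simp only [c]
      rw [max_eq_right h, div_self h4, max_eq_left (by linarith : 0 ≤ t - δ'), mul_assoc]
      field_simp
  have hnnA : ∀ t ∈ spectrum ℝ a, 0 ≤ t := fun t ht => spectrum_nonneg_of_nonneg ha ht
  have hnnB : ∀ t ∈ spectrum ℝ b, 0 ≤ t := fun t ht => spectrum_nonneg_of_nonneg hb ht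
  set G := cfc g a with hG
  set P := cfc p b with hP
  set S := cfc s b with hS
  have hGs : IsSelfAdjoint G := cfc_predicate g a
  have hPs : IsSelfAdjoint P := cfc_predicate p b
  have hSs : IsSelfAdjoint S := cfc_predicate s b
  have hGa : G = a * cfc q a := by
    rw [hG, cfc_mul (fun t => t) q a continuousOn_id hq.continuousOn, cfc_id' ℝ a]
  have hPb : P = cfc r b * b := by
    rw [hP, cfc_mul r (fun t => t) b hr.continuousOn continuousOn_id, cfc_id' ℝ b]
  have hGG : G * G ≤ ε⁻¹ • a := by
    rw [hG, ← cfc_mul g g a hg.continuousOn hg.continuousOn, ← cfc_const_mul_id ε⁻¹ a]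
    exact cfc_mono (fun t ht => (hg_le t (hnnA t ht)).2.2.1) (hg.mul hg).continuousOn
      (by fun_prop)
  have hPP : P * P ≤ (δ * (δ - δ'))⁻¹ • b := by
    rw [hP, ← cfc_mul p p b hp.continuousOn hp.continuousOn, ← cfc_const_mul_id _ b]
    exact cfc_mono (fun t ht => (hp_le t (hnnB t ht)).2) (hp.mul hp).continuousOn
      (by fun_prop)
  have hGn : ‖G‖ ≤ 1 := norm_cfc_le zero_le_one fun t ht => by
    rw [Real.norm_of_nonneg (hg_le t (hnnA t ht)).1]
    exact (hg_le t (hnnA t ht)).2.1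
  have hPn : ‖P‖ ^ 2 ≤ (δ - δ')⁻¹ := by
    refine norm_sq_le_of_norm_mul_self_le hPs ?_
    rw [hP, ← cfc_mul p p b hp.continuousOn hp.continuousOn]
    refine norm_cfc_le (inv_pos.2 hd).le fun t ht => ?_
    rw [Real.norm_of_nonneg (mul_self_nonneg _)]
    exact (hp_le t (hnnB t ht)).1
  have hSS : S * S = cutoff b δ := by
    rw [hS, ← cfc_mul s s b hs.continuousOn hs.continuousOn]
    exact cfc_congr fun t _ => Real.mul_self_sqrt (le_max_right _ _)
  have hSPc : S * (P * (cutoff b δ' * (P * S))) = cutoff b δ := by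
    have hcut : cutoff b δ' = cfc c b := rfl
    rw [hS, hP, hcut, ← cfc_mul p s b hp.continuousOn hs.continuousOn,
      ← cfc_mul c (fun t => p t * s t) b hc.continuousOn (hp.mul hs).continuousOn,
      ← cfc_mul p (fun t => c t * (p t * s t)) b hp.continuousOn
        (hc.mul (hp.mul hs)).continuousOn,
      ← cfc_mul s (fun t => p t * (c t * (p t * s t))) b hs.continuousOn
        (hp.mul (hc.mul (hp.mul hs))).continuousOn]
    exact cfc_congr fun t _ => hspc t
  have hxS : ‖x * S‖ ^ 2 ≤ K := by
    have h1 : ‖x * S‖ ^ 2 = ‖x * cutoff b δ * star x‖ := by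
      rw [sq, ← CStarRing.norm_self_mul_star, star_mul, hSs.star_eq, ← hSS]
      simp only [mul_assoc]
    have h2 : ‖x * cutoff b δ * star x‖ ≤ ‖a‖ + ‖a - x * cutoff b δ * star x‖ := by
      simpa using norm_sub_le a (a - x * cutoff b δ * star x)
    linarith
  let E : ℝ → ℝ := fun t => t - g t * t * g t
  have hE : Continuous E := by fun_prop
  have hEeq : cfc E a = a - G * a * G := by
    rw [cfc_sub (fun t => t) (fun t => g t * t * g t) a continuousOn_id
      (by fun_prop), cfc_mul (fun t => g t * t) g a (by fun_prop) hg.continuousOn,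
      cfc_mul g (fun t => t) a hg.continuousOn continuousOn_id, cfc_id' ℝ a]
  refine ⟨G * x * S * P, cfc E a, cfc q a * x * S * cfc r b, cfc (fun t => 1 - g t * g t) a,
    ?_, ?_, ?_, ?_, ?_, cfc_predicate E a, ?_, ?_⟩
  · rw [hGa, hPb]; simp only [mul_assoc]
  · have h1 : ‖G * (x * S)‖ ^ 2 ≤ K := by
      have : ‖G * (x * S)‖ ≤ ‖x * S‖ := (norm_mul_le _ _).trans
        (mul_le_of_le_one_left (norm_nonneg _) hGn)
      exact (pow_le_pow_left₀ (norm_nonneg _) this 2).trans hxS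
    have h2 := star_mul_mul_le_of_norm_sq_le (G * (x * S)) P h1
    calc _ = star P * (star (G * (x * S)) * (G * (x * S))) * P := by
          simp only [star_mul, mul_assoc]
      _ ≤ _ := h2
      _ ≤ K • ((δ * (δ - δ'))⁻¹ • b) := by
          rw [hPs.star_eq]; exact smul_le_smul_of_nonneg_left hPP hK0
      _ = _ := by rw [smul_smul, div_eq_mul_inv]
  · have h1 : ‖star (x * S * P)‖ ^ 2 ≤ K * (δ - δ')⁻¹ := by
      rw [norm_star]
      have := pow_le_pow_left₀ (norm_nonneg _) (norm_mul_le (x * S) P) 2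
      rw [mul_pow] at this
      exact this.trans (mul_le_mul hxS hPn (by positivity) hK0)
    have h2 := star_mul_mul_le_of_norm_sq_le (star (x * S * P)) G h1
    calc _ = star G * (star (star (x * S * P)) * star (x * S * P)) * G := by
          simp only [star_mul, star_star, mul_assoc, hGs.star_eq]
      _ ≤ _ := h2
      _ ≤ (K * (δ - δ')⁻¹) • (ε⁻¹ • a) := by
          rw [hGs.star_eq]
          exact smul_le_smul_of_nonneg_left hGG (mul_nonneg hK0 (inv_pos.2 hd).le)
      _ = _ := by rw [smul_smul, div_eq_mul_inv, mul_inv, mul_assoc]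
  · conv_rhs => rw [← cfc_id' ℝ a, ← cfc_comp' (fun t => 1 - g t * g t) (fun t => t) a
      (by fun_prop) (by fun_prop), ← cfc_mul _ _ a (by fun_prop) (by fun_prop)]
    exact cfc_congr fun t _ => by simp only [E]; ring
  · conv_rhs => rw [← cfc_id' ℝ a, ← cfc_comp' (fun t => 1 - g t * g t) (fun t => t) a
      (by fun_prop) (by fun_prop), ← cfc_mul _ _ a (by fun_prop) (by fun_prop)]
    exact cfc_congr fun t _ => by simp only [E]; ring
  · rw [← cfc_mul E E a hE.continuousOn hE.continuousOn, ← cfc_const_mul ε E a hE.continuousOn]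
    exact cfc_mono (fun t ht => (hg_le t (hnnA t ht)).2.2.2) (hE.mul hE).continuousOn
      (by fun_prop)
  · have h1 : a - G * x * S * P * cutoff b δ' * star (G * x * S * P) - cfc E a
        = G * (a - x * cutoff b δ * star x) * G := by
      rw [hEeq, ← hSPc]
      simp only [star_mul, hGs.star_eq, hPs.star_eq, hSs.star_eq, mul_sub, sub_mul, mul_assoc]
      abel
    rw [h1]
    calc _ ≤ ‖G‖ * ‖a - x * cutoff b δ * star x‖ * ‖G‖ := norm_mul₃_le
      _ ≤ 1 * η * 1 := by gcongr
      _ = η := by ring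

end CStar

theorem norm_coe_multiplier {A : Type*} [NonUnitalCStarAlgebra A] (a : A) :
    ‖(a : 𝓜(ℂ, A))‖ = ‖a‖ := by
  rw [← DoubleCentralizer.norm_fst, DoubleCentralizer.coe_fst]
  exact ContinuousLinearMap.opNorm_mul_apply ℂ A a

theorem eq_of_forall_mul_left_eq {A : Type*} [NonUnitalCStarAlgebra A] {u v : A}
    (h : ∀ y, y * u = y * v) : u = v := by
  rw [← sub_eq_zero, ← CStarRing.star_mul_self_eq_zero_iff, mul_sub, h, sub_self]

theorem eq_of_forall_mul_right_eq {A : Type*} [NonUnitalCStarAlgebra A] {u v : A}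
    (h : ∀ y, u * y = v * y) : u = v := by
  rw [← sub_eq_zero, ← CStarRing.mul_star_self_eq_zero_iff, sub_mul, h, sub_self]

theorem mul_coe_multiplier {A : Type*} [NonUnitalCStarAlgebra A] (T : 𝓜(ℂ, A)) (a : A) :
    T * (a : 𝓜(ℂ, A)) = (T.fst a : A) := by
  refine DoubleCentralizer.ext ℂ A _ _ (Prod.ext ?_ ?_)
  · refine ContinuousLinearMap.ext fun x => eq_of_forall_mul_left_eq fun y => ?_
    change y * T.fst (a * x) = y * (T.fst a * x)
    rw [← T.central, ← mul_assoc, ← mul_assoc, T.central]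
  · refine ContinuousLinearMap.ext fun x => ?_
    exact T.central x a

theorem coe_mul_multiplier {A : Type*} [NonUnitalCStarAlgebra A] (T : 𝓜(ℂ, A)) (a : A) :
    (a : 𝓜(ℂ, A)) * T = (T.snd a : A) := by
  refine DoubleCentralizer.ext ℂ A _ _ (Prod.ext ?_ ?_)
  · refine ContinuousLinearMap.ext fun x => ?_
    exact (T.central a x).symm
  · refine ContinuousLinearMap.ext fun x => eq_of_forall_mul_right_eq fun y => ?_
    change T.snd (x * a) * y = x * T.snd a * y
    rw [T.central, mul_assoc, mul_assoc, T.central]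

theorem exists_strictTendsto_of_cauchySeq {A : Type*} [NonUnitalCStarAlgebra A]
    (P : ℕ → 𝓜(ℂ, A)) (h₁ : ∀ a : A, CauchySeq fun n => P n * (a : 𝓜(ℂ, A)))
    (h₂ : ∀ a : A, CauchySeq fun n => (a : 𝓜(ℂ, A)) * P n) :
    ∃ X, StrictTendsto P X := by
  have hiso : Isometry (fun a : A => (a : 𝓜(ℂ, A))) :=
    AddMonoidHomClass.isometry_of_norm (DoubleCentralizer.coeHom (𝕜 := ℂ) (A := A))
      norm_coe_multiplier
  have c₁ : ∀ a : A, ∃ y, Tendsto (fun n => (P n).fst a) atTop (𝓝 y) := fun a => by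
    refine cauchySeq_tendsto_of_complete (hiso.isUniformInducing.cauchy_map_iff.1 ?_)
    rw [Filter.map_map]
    simpa only [mul_coe_multiplier] using! h₁ a
  have c₂ : ∀ a : A, ∃ y, Tendsto (fun n => (P n).snd a) atTop (𝓝 y) := fun a => by
    refine cauchySeq_tendsto_of_complete (hiso.isUniformInducing.cauchy_map_iff.1 ?_)
    rw [Filter.map_map]
    simpa only [coe_mul_multiplier] using! h₂ a
  choose f hf using c₁
  choose g hg using c₂
  let X : 𝓜(ℂ, A) :=
    { fst := continuousLinearMapOfTendsto (fun n => (P n).fst) (tendsto_pi_nhds.2 hf)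
      snd := continuousLinearMapOfTendsto (fun n => (P n).snd) (tendsto_pi_nhds.2 hg)
      central := fun x y => by
        have e₁ := (hg x).mul_const y
        have e₂ := (hf y).const_mul x
        simp only [(P _).central] at e₁
        exact tendsto_nhds_unique e₁ e₂ }
  refine ⟨X, fun a => ⟨?_, ?_⟩⟩
  · simp only [mul_coe_multiplier, norm_coe_multiplier]
    exact tendsto_iff_norm_sub_tendsto_zero.1 (hf a)
  · simp only [coe_mul_multiplier, norm_coe_multiplier]
    exact tendsto_iff_norm_sub_tendsto_zero.1 (hg a)

section Strict

variable {A : Type*} [NonUnitalCStarAlgebra A]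

theorem star_coe_multiplier (a : A) : star (a : 𝓜(ℂ, A)) = (star a : A) :=
  (map_star (DoubleCentralizer.coeHom (𝕜 := ℂ) (A := A)) a).symm

theorem norm_multiplier_le_of_forall {c : ℝ} (hc : 0 ≤ c) {D : 𝓜(ℂ, A)}
    (h : ∀ a b : A, ‖(b : 𝓜(ℂ, A)) * D * a‖ ≤ c * ‖b‖ * ‖a‖) : ‖D‖ ≤ c := by
  rw [← DoubleCentralizer.norm_fst]
  refine ContinuousLinearMap.opNorm_le_bound _ hc fun a => ?_
  have key := h a (star (D.fst a))
  rw [mul_assoc, mul_coe_multiplier, ← star_coe_multiplier, CStarRing.norm_star_mul_self,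
    norm_coe_multiplier, norm_star] at key
  rcases (norm_nonneg (D.fst a)).eq_or_lt with h0 | h0
  · rw [← h0]; positivity
  · nlinarith

theorem multiplier_eq_of_forall {X Y : 𝓜(ℂ, A)}
    (h : ∀ a b : A, (b : 𝓜(ℂ, A)) * X * a = b * Y * a) : X = Y := by
  rw [← sub_eq_zero, ← norm_le_zero_iff]
  refine norm_multiplier_le_of_forall le_rfl fun a b => ?_
  rw [mul_sub, sub_mul, h, sub_self, norm_zero]
  simp

namespace StrictTendsto

variable {P : ℕ → 𝓜(ℂ, A)} {L : 𝓜(ℂ, A)}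

theorem tendsto_mul_coe (h : StrictTendsto P L) (a : A) :
    Tendsto (fun n => P n * (a : 𝓜(ℂ, A))) atTop (𝓝 (L * a)) := by
  rw [tendsto_iff_norm_sub_tendsto_zero]
  simpa only [sub_mul] using (h a).1

theorem tendsto_coe_mul (h : StrictTendsto P L) (a : A) :
    Tendsto (fun n => (a : 𝓜(ℂ, A)) * P n) atTop (𝓝 (a * L)) := by
  rw [tendsto_iff_norm_sub_tendsto_zero]
  simpa only [mul_sub] using (h a).2

theorem isSelfAdjoint (h : StrictTendsto P L) (hP : ∀ n, IsSelfAdjoint (P n)) :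
    IsSelfAdjoint L := by
  refine multiplier_eq_of_forall fun a b => ?_
  have h₁ := (h.tendsto_coe_mul b).mul_const (a : 𝓜(ℂ, A))
  have h₂ := ((h.tendsto_coe_mul (star a)).mul_const ((star b : A) : 𝓜(ℂ, A))).star
  simp only [star_mul, star_coe_multiplier, star_star, (hP _).star_eq] at h₂
  simp only [← mul_assoc] at h₂
  exact tendsto_nhds_unique h₂ h₁

theorem mul_eq_mul_self {x : ℕ → 𝓜(ℂ, A)}
    (h : StrictTendsto (fun n => ∑ i ∈ Finset.range n, x i) L)
    (hx : ∀ n m, n ≠ m → x n * x m = 0) (n : ℕ) : x n * L = x n * x n := by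
  refine multiplier_eq_of_forall fun a b => ?_
  have h₁ := (h.tendsto_mul_coe a).const_mul ((b : 𝓜(ℂ, A)) * x n)
  refine tendsto_nhds_unique ?_ (tendsto_const_nhds.congr' ?_)
    (f := fun N => (b : 𝓜(ℂ, A)) * x n * ((∑ i ∈ Finset.range N, x i) * a)) (l := atTop)
  · simpa only [mul_assoc] using h₁
  · filter_upwards [eventually_gt_atTop n] with N hN
    have : x n * ∑ i ∈ Finset.range N, x i = x n * x n := by
      rw [Finset.mul_sum]
      exact Finset.sum_eq_single_of_mem n (Finset.mem_range.2 hN) fun m _ hm => hx n m hm.symm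
    rw [← this]
    simp only [mul_assoc]

theorem norm_sub_mul_mul_star_le {Q : ℕ → 𝓜(ℂ, A)} {X F : 𝓜(ℂ, A)} {c : ℝ}
    (hP : StrictTendsto P L) (hQ : StrictTendsto Q X) (hc : 0 ≤ c)
    (h : ∀ n, ‖P n - Q n * F * star (Q n)‖ ≤ c) : ‖L - X * F * star X‖ ≤ c := by
  refine norm_multiplier_le_of_forall hc fun a b => ?_
  have h₁ := (hP.tendsto_coe_mul b).mul_const (a : 𝓜(ℂ, A))
  have h₂ := ((hQ.tendsto_coe_mul b).mul_const F).mul (hQ.tendsto_coe_mul (star a)).star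
  have h₃ := (h₁.sub h₂).norm
  have e : ∀ R Y : 𝓜(ℂ, A), (b : 𝓜(ℂ, A)) * R * a
      - (b : 𝓜(ℂ, A)) * Y * F * star (((star a : A) : 𝓜(ℂ, A)) * Y)
      = b * (R - Y * F * star Y) * a := fun R Y => by
    rw [star_mul, star_coe_multiplier, star_star]
    simp only [mul_sub, sub_mul, mul_assoc]
  rw [e] at h₃
  simp only [e] at h₃
  refine le_of_tendsto h₃ (.of_forall fun n => ?_)
  calc _ ≤ ‖(b : 𝓜(ℂ, A))‖ * ‖P n - Q n * F * star (Q n)‖ * ‖(a : 𝓜(ℂ, A))‖ := norm_mul₃_le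
    _ ≤ ‖b‖ * c * ‖a‖ := by
        rw [norm_coe_multiplier, norm_coe_multiplier]
        gcongr
        exact h n
    _ = _ := by ring

end StrictTendsto

end Strict

theorem cauchySeq_sum_mul_of_star_mul_self_le {M : Type*} [CStarAlgebra M] [PartialOrder M]
    [StarOrderedRing M] {W B : ℕ → M} {C : ℝ} (hC : 0 ≤ C) (a : M)
    (horth : ∀ i j, i ≠ j → star (W i) * W j = 0) (hle : ∀ i, star (W i) * W i ≤ C • B i)
    (hB : CauchySeq fun n => (∑ i ∈ Finset.range n, B i) * a) :
    CauchySeq fun n => (∑ i ∈ Finset.range n, W i) * a := by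
  have bound : ∀ m n, m ≤ n →
      ‖(∑ i ∈ Finset.range n, W i) * a - (∑ i ∈ Finset.range m, W i) * a‖ ^ 2 ≤
        C * ‖a‖ * ‖(∑ i ∈ Finset.range n, B i) * a - (∑ i ∈ Finset.range m, B i) * a‖ := by
    intro m n hmn
    rw [← sub_mul, ← sub_mul, ← Finset.sum_Ico_eq_sub _ hmn, ← Finset.sum_Ico_eq_sub _ hmn]
    set s := Finset.Ico m n
    have hsum : star (∑ i ∈ s, W i) * (∑ i ∈ s, W i) = ∑ i ∈ s, star (W i) * W i := by
      rw [star_sum, Finset.sum_mul_sum]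
      refine Finset.sum_congr rfl fun i hi => ?_
      exact Finset.sum_eq_single_of_mem i hi fun j _ hj => horth i j hj.symm
    have hle' : star (∑ i ∈ s, W i) * (∑ i ∈ s, W i) ≤ C • ∑ i ∈ s, B i := by
      rw [hsum, Finset.smul_sum]
      exact Finset.sum_le_sum fun i _ => hle i
    have h1 := star_left_conjugate_le_conjugate hle' a
    have h0 : star ((∑ i ∈ s, W i) * a) * ((∑ i ∈ s, W i) * a)
        = star a * (star (∑ i ∈ s, W i) * (∑ i ∈ s, W i)) * a := by
      simp only [star_mul, mul_assoc]
    rw [← h0] at h1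
    rw [sq, ← CStarRing.norm_star_mul_self]
    calc _ ≤ ‖star a * (C • ∑ i ∈ s, B i) * a‖ :=
          CStarAlgebra.norm_le_norm_of_nonneg_of_le (star_mul_self_nonneg _) h1
      _ = ‖C • (star a * ((∑ i ∈ s, B i) * a))‖ := by
          rw [mul_smul_comm, smul_mul_assoc, mul_assoc]
      _ = C * ‖star a * ((∑ i ∈ s, B i) * a)‖ := by rw [norm_smul, Real.norm_of_nonneg hC]
      _ ≤ C * (‖star a‖ * ‖(∑ i ∈ s, B i) * a‖) := by gcongr; exact norm_mul_le _ _
      _ = _ := by rw [norm_star]; ring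
  rw [Metric.cauchySeq_iff'] at hB ⊢
  intro ε hε
  have hD : 0 < C * ‖a‖ + 1 := by positivity
  obtain ⟨N, hN⟩ := hB (ε ^ 2 / (C * ‖a‖ + 1)) (by positivity)
  refine ⟨N, fun n hn => ?_⟩
  have h1 := hN n hn
  have h2 := bound N n hn
  rw [dist_eq_norm] at h1 ⊢
  rw [lt_div_iff₀ hD] at h1
  refine lt_of_pow_lt_pow_left₀ 2 hε.le (h2.trans_lt (lt_of_le_of_lt ?_ h1))
  nlinarith [norm_nonneg ((∑ i ∈ Finset.range n, B i) * a - (∑ i ∈ Finset.range N, B i) * a)]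

theorem norm_le_of_mul_eq_mul_self {M : Type*} [CStarAlgebra M] {a t : M}
    (ha : IsSelfAdjoint a) (h : a * t = a * a) : ‖a‖ ≤ ‖t‖ := by
  have h1 := norm_mul_le a t
  rw [h, ha.norm_mul_self] at h1
  rcases (norm_nonneg a).eq_or_lt with h0 | h0
  · rw [← h0]; exact norm_nonneg t
  · nlinarith

theorem exists_norm_sub_le_of_strict_sum {A : Type*} [NonUnitalCStarAlgebra A]
    [PartialOrder 𝓜(ℂ, A)] [StarOrderedRing 𝓜(ℂ, A)]
    {As Bs : ℕ → 𝓜(ℂ, A)} (hA : ∀ n, 0 ≤ As n) (hB : ∀ n, 0 ≤ Bs n)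
    (hAorth : ∀ n m, n ≠ m → As n * As m = 0)
    (hBorth : ∀ n m, n ≠ m → Bs n * Bs m = 0)
    {T S : 𝓜(ℂ, A)}
    (hT : StrictTendsto (fun n => ∑ i ∈ Finset.range n, As i) T)
    (hS : StrictTendsto (fun n => ∑ i ∈ Finset.range n, Bs i) S)
    {δ δ' ε : ℝ} (hcuntz : ∀ n, CuntzBelow (As n) (cutoff (Bs n) δ))
    (hδ'₀ : 0 < δ') (hδ' : δ' < δ) (hε : 0 < ε) :
    ∃ X, ‖T - X * cutoff S δ' * star X‖ ≤ ε + ε := by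
  have hδ : 0 < δ := hδ'₀.trans hδ'
  have hd : 0 < δ - δ' := sub_pos.2 hδ'
  have hAs : ∀ n, IsSelfAdjoint (As n) := fun n => .of_nonneg (hA n)
  have hBs : ∀ n, IsSelfAdjoint (Bs n) := fun n => .of_nonneg (hB n)
  let η : ℕ → ℝ := fun n => ε / 2 * (1 / 2) ^ n
  have hη : ∀ n, 0 < η n := fun n => by positivity
  have hη_le : ∀ n, η n ≤ ε := fun n => by
    have : ((1 : ℝ) / 2) ^ n ≤ 1 := pow_le_one₀ (by norm_num) (by norm_num)
    simp only [η]
    nlinarith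
  have hx : ∀ n, ∃ x, ‖As n - x * cutoff (Bs n) δ * star x‖ ≤ η n := fun n => by
    obtain ⟨x, hx⟩ := hcuntz n
    obtain ⟨k, hk⟩ := (hx.eventually_le_const (hη n)).exists
    exact ⟨x k, hk⟩
  choose x hx using hx
  have hK : ∀ n, ‖As n‖ + η n ≤ ‖T‖ + ε := fun n =>
    add_le_add (norm_le_of_mul_eq_mul_self (hAs n) (hT.mul_eq_mul_self hAorth n)) (hη_le n)
  have hK0 : 0 ≤ ‖T‖ + ε := by positivity
  choose w e u v hw hwB hwA hev hev' hes hee hnorm using fun n =>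
    exists_intertwiner hε hδ'₀ hδ' (hA n) (hB n) (hK n) (hx n)
  have hw₁ : ∀ i j, i ≠ j → star (w i) * w j = 0 := fun i j hij => by
    have : star (w i) * w j = star (u i * Bs i) * (As i * As j) * (u j * Bs j) := by
      rw [hw i, hw j]
      simp only [star_mul, (hAs i).star_eq, (hBs i).star_eq, mul_assoc]
    rw [this, hAorth i j hij, mul_zero, zero_mul]
  have hw₂ : ∀ i j, i ≠ j → star (star (w i)) * star (w j) = 0 := fun i j hij => by
    have : star (star (w i)) * star (w j) = As i * u i * (Bs i * Bs j) * star (As j * u j) := by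
      rw [star_star, hw i, hw j]
      simp only [star_mul, (hAs j).star_eq, (hBs j).star_eq, mul_assoc]
    rw [this, hBorth i j hij, mul_zero, zero_mul]
  have he : ∀ i j, i ≠ j → e i * e j = 0 := fun i j hij => by
    rw [hev i, hev' j, mul_assoc, ← mul_assoc (As i), hAorth i j hij, zero_mul, mul_zero]
  obtain ⟨X, hX⟩ := exists_strictTendsto_of_cauchySeq
    (fun n => ∑ i ∈ Finset.range n, w i)
    (fun a => cauchySeq_sum_mul_of_star_mul_self_le
      (C := (‖T‖ + ε) / (δ * (δ - δ'))) (by positivity) _ hw₁ hwB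
      (hS.tendsto_mul_coe a).cauchySeq)
    (fun a => by
      have h := cauchySeq_sum_mul_of_star_mul_self_le (W := fun i => star (w i)) (B := As)
        (C := (‖T‖ + ε) / ((δ - δ') * ε)) (by positivity) ((star a : A) : 𝓜(ℂ, A)) hw₂
        (fun i => by simpa only [star_star] using hwA i)
        (hT.tendsto_mul_coe (star a)).cauchySeq
      obtain ⟨y, hy⟩ := cauchySeq_tendsto_of_complete h
      have hy' := hy.star
      simp only [star_mul, star_sum, star_star, star_coe_multiplier] at hy'
      exact hy'.cauchySeq)
  refine ⟨X, hT.norm_sub_mul_mul_star_le hX (by positivity) fun N => ?_⟩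
  have hSs : IsSelfAdjoint S :=
    hS.isSelfAdjoint fun n => isSelfAdjoint_sum _ fun i _ => hBs i
  have hBS : ∀ n, Bs n * S = Bs n * Bs n := hS.mul_eq_mul_self hBorth
  have hSB : ∀ n, S * Bs n = Bs n * Bs n := fun n => by
    simpa [(hBs n).star_eq, hSs.star_eq] using congrArg star (hBS n)
  have hcut : ∀ n, Bs n * cutoff S δ' = Bs n * cutoff (Bs n) δ' := fun n =>
    mul_cfc_eq_mul_cfc_of_mul_eq (hBs n) hSs (hBS n) (hSB n) (by fun_prop)
  have hcomm : ∀ n, Bs n * cutoff (Bs n) δ' = cutoff (Bs n) δ' * Bs n := fun n =>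
    (((Commute.refl (Bs n)).cfc_real _).eq).symm
  have hwF : ∀ n, w n * cutoff S δ' = w n * cutoff (Bs n) δ' := fun n => by
    rw [hw n, mul_assoc, hcut, ← mul_assoc]
  have hcross : ∀ i j, i ≠ j → w i * cutoff S δ' * star (w j) = 0 := fun i j hij => by
    have : w i * cutoff S δ' * star (w j)
        = As i * u i * cutoff (Bs i) δ' * (Bs i * Bs j) * star (As j * u j) := by
      rw [hw i, mul_assoc _ (Bs i), hcut, hcomm, hw j, star_mul _ (Bs j), (hBs j).star_eq]
      simp only [mul_assoc]
    rw [this, hBorth i j hij, mul_zero, zero_mul]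
  have hsum : (∑ i ∈ Finset.range N, w i) * cutoff S δ' * star (∑ i ∈ Finset.range N, w i)
      = ∑ i ∈ Finset.range N, w i * cutoff (Bs i) δ' * star (w i) := by
    rw [star_sum, Finset.sum_mul, Finset.sum_mul_sum]
    refine Finset.sum_congr rfl fun i hi => ?_
    rw [← hwF]
    exact Finset.sum_eq_single_of_mem i hi fun j _ hj => hcross i j hj.symm
  have hsplit : ∑ i ∈ Finset.range N, As i
      - ∑ i ∈ Finset.range N, w i * cutoff (Bs i) δ' * star (w i)
      = ∑ i ∈ Finset.range N, e i
        + ∑ i ∈ Finset.range N, (As i - w i * cutoff (Bs i) δ' * star (w i) - e i) := by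
    simp only [Finset.sum_sub_distrib]
    abel
  rw [hsum, hsplit]
  refine (norm_add_le _ _).trans (add_le_add ?_ ?_)
  · exact norm_sum_le_of_mul_self_le_smul hε.le hes hee he _
  · calc _ ≤ ∑ i ∈ Finset.range N, η i := norm_sum_le_of_le _ fun i _ => hnorm i
      _ = ε / 2 * ∑ i ∈ Finset.range N, (1 / 2 : ℝ) ^ i := by rw [Finset.mul_sum]
      _ ≤ ε / 2 * 2 := by gcongr; exact sum_geometric_two_le N
      _ = ε := by ring

theorem stmt_14 {A : Type*} [NonUnitalCStarAlgebra A]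
    [PartialOrder 𝓜(ℂ, A)] [StarOrderedRing 𝓜(ℂ, A)]
    (As Bs : ℕ → 𝓜(ℂ, A)) (hA : ∀ n, 0 ≤ As n) (hB : ∀ n, 0 ≤ Bs n)
    (hAorth : ∀ n m, n ≠ m → As n * As m = 0)
    (hBorth : ∀ n m, n ≠ m → Bs n * Bs m = 0)
    (T S : 𝓜(ℂ, A))
    (hT : StrictTendsto (fun n => ∑ i ∈ Finset.range n, As i) T)
    (hS : StrictTendsto (fun n => ∑ i ∈ Finset.range n, Bs i) S)
    (δ : ℝ) (hδ : 0 < δ) (hcuntz : ∀ n, CuntzBelow (As n) (cutoff (Bs n) δ))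
    (δ' : ℝ) (hδ'₀ : 0 < δ') (hδ' : δ' < δ) :
    CuntzBelow T (cutoff S δ') := by
  have h : ∀ n : ℕ, ∃ X, ‖T - X * cutoff S δ' * star X‖ ≤
      1 / ((n : ℝ) + 1) + 1 / ((n : ℝ) + 1) := fun n =>
    exists_norm_sub_le_of_strict_sum hA hB hAorth hBorth hT hS hcuntz hδ'₀ hδ'
      Nat.one_div_pos_of_nat
  choose X hX using h
  refine ⟨X, squeeze_zero (fun _ => norm_nonneg _) hX ?_⟩
  simpa using tendsto_one_div_add_atTop_nhds_zero_nat.add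
    (tendsto_one_div_add_atTop_nhds_zero_nat (𝕜 := ℝ))
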